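/- Let w ∈ (−1/3, 1) and β ∈ ℝ. The Jacobian matrix of the type III vector field f at the point D = (2,1) has eigenvalues −3 and 3β(1−w)−6w; consequently D is a sink of the planar system when β(1−w) < 2w and a saddle when β(1−w) > 2w. -/

import Mathlib

/-!
The line `Σ = 1` is invariant under the type III flow, because `f₂` carries the factor `1 − Σ²`.
Hence `∂f₂/∂H` vanishes at `D = (2,1)`, the Jacobian there is upper triangular
(`JacIII_at_D`), and its characteristic polynomial is read off the diagonal. The signs of the
eigenvalues follow since the second one is `3 (β(1−w) − 2w)`.
-/

open Polynomial

/-- First component of the type III vector field: `−(1−H²)(2 − (3/2)(1−w)(1−Σ²) − HΣ)`. -/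
noncomputable def fIII1 (w β H S : ℝ) : ℝ :=
  -(1 - H ^ 2) * (2 - 3 / 2 * (1 - w) * (1 - S ^ 2) - H * S)

/-- Second component of the type III vector field: `−(1−Σ²)((1−H²) + (3/2)(1−w)(HΣ+β))`. -/
noncomputable def fIII2 (w β H S : ℝ) : ℝ :=
  -(1 - S ^ 2) * ((1 - H ^ 2) + 3 / 2 * (1 - w) * (H * S + β))

/-- The Jacobian matrix (matrix of partial derivatives) of the type III vector field. -/
noncomputable def JacIII (w β H S : ℝ) : Matrix (Fin 2) (Fin 2) ℝ :=
  !![deriv (fun x => fIII1 w β x S) H, deriv (fun y => fIII1 w β H y) S;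
     deriv (fun x => fIII2 w β x S) H, deriv (fun y => fIII2 w β H y) S]

/-- At `D = (2,1)` the Jacobian is upper triangular: `f₂` vanishes along the line
`Σ = 1`, so the lower left entry is zero. -/
theorem JacIII_at_D (w β : ℝ) :
    JacIII w β 2 1 = !![-3, 3 * (3 * (1 - w) - 2); 0, 3 * β * (1 - w) - 6 * w] := by
  have sq (a : ℝ) : HasDerivAt (fun x : ℝ => 1 - x ^ 2) (-(2 * a)) a := by
    simpa using (hasDerivAt_pow 2 a).const_sub 1
  have h11 : HasDerivAt (fun x => fIII1 w β x 1) (-3) 2 := by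
    have h := (sq 2).neg.mul (((hasDerivAt_id (2 : ℝ)).mul_const 1).const_sub
      (2 - 3 / 2 * (1 - w) * (1 - 1 ^ 2)))
    exact h.congr_deriv (by norm_num)
  have h12 : HasDerivAt (fun y => fIII1 w β 2 y) (3 * (3 * (1 - w) - 2)) 1 := by
    have h := ((((sq 1).const_mul (3 / 2 * (1 - w))).const_sub 2).sub
      ((hasDerivAt_id (1 : ℝ)).const_mul 2)).const_mul (-(1 - 2 ^ 2))
    exact h.congr_deriv (by ring)
  have h21 : HasDerivAt (fun x => fIII2 w β x 1) 0 2 := by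
    simpa [fIII2] using hasDerivAt_const (2 : ℝ) (0 : ℝ)
  have h22 : HasDerivAt (fun y => fIII2 w β 2 y) (3 * β * (1 - w) - 6 * w) 1 := by
    have h := (sq 1).neg.mul (((((hasDerivAt_id (1 : ℝ)).const_mul 2).add_const β).const_mul
      (3 / 2 * (1 - w))).const_add (1 - 2 ^ 2))
    exact h.congr_deriv (by simp only [id, Pi.neg_apply]; ring)
  rw [JacIII, h11.deriv, h12.deriv, h21.deriv, h22.deriv]

/-- The Jacobian of the type III vector field at `D = (2,1)` has eigenvalues `−3` and
`3β(1−w)−6w`; consequently `D` is a sink when `β(1−w) < 2w` (both eigenvalues negative)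
and a saddle when `β(1−w) > 2w` (eigenvalues of opposite sign). -/
theorem jacobian_at_D (w β : ℝ) (hw : w ∈ Set.Ioo (-(1 / 3) : ℝ) 1) :
    (JacIII w β 2 1).charpoly = (X - C (-3)) * (X - C (3 * β * (1 - w) - 6 * w)) ∧
      (-3 : ℝ) < 0 ∧
      (β * (1 - w) < 2 * w → 3 * β * (1 - w) - 6 * w < 0) ∧
      (2 * w < β * (1 - w) → 0 < 3 * β * (1 - w) - 6 * w) := by
  refine ⟨?_, by norm_num, fun h => by linarith, fun h => by linarith⟩
  rw [JacIII_at_D, Matrix.charpoly, Matrix.det_fin_two]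
  simp
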